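/- Let ν > 0, let f : ℝ → ℝ be C², 2π-periodic, and let g : ℝ → ℝ be bounded. Suppose f(x)³ − f(x) − ν f''(x) = g(x) for every x ∈ ℝ, and set M = sup_{x ∈ ℝ} |f(x)| and G = sup_{x ∈ ℝ} |g(x)|. Then M³ − M ≤ G. -/

import Mathlib

open Real Set

noncomputable section

theorem aux_max (f : ℝ → ℝ) (hf : Continuous f) (x₀ : ℝ) (h : ∀ x, f x ≤ f x₀) :
    deriv (deriv f) x₀ ≤ 0 := by
  by_contra! hc
  have hmax : IsLocalMax f x₀ := Filter.Eventually.of_forall h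
  have hmin := isLocalMin_of_deriv_deriv_pos hc hmax.deriv_eq_zero hf.continuousAt
  have he : f =ᶠ[nhds x₀] fun _ => f x₀ := by
    filter_upwards [hmin] with x hx
    exact le_antisymm (h x) hx
  have h2 := he.deriv.deriv_eq
  simp at h2
  linarith

/-- elliptic maximum-principle bound used in the proof of
Proposition 5.3: if `f` is `C²` and `2π`-periodic, `g` is bounded, and
`f³ − f − νf'' = g` on `ℝ`, then `M³ − M ≤ G` where `M = sup|f|` and `G = sup|g|`. -/
theorem stmt18 (ν : ℝ) (hν : 0 < ν) (f g : ℝ → ℝ)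
    (hf : ContDiff ℝ 2 f) (hfper : Function.Periodic f (2 * Real.pi))
    (hg : ∃ B : ℝ, ∀ x : ℝ, |g x| ≤ B)
    (heq : ∀ x : ℝ, f x ^ 3 - f x - ν * deriv (deriv f) x = g x) :
    (⨆ x : ℝ, |f x|) ^ 3 - (⨆ x : ℝ, |f x|) ≤ ⨆ x : ℝ, |g x| := by
  obtain ⟨B, hB⟩ := hg
  have hc : Continuous f := hf.continuous
  have hpi : (0:ℝ) < 2 * Real.pi := by positivity
  obtain ⟨x₀, -, hx₀⟩ := (isCompact_Icc (a := (0:ℝ)) (b := 2 * Real.pi)).exists_isMaxOn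
    ⟨0, by simp [hpi.le]⟩ hc.abs.continuousOn
  have hall : ∀ x, |f x| ≤ |f x₀| := by
    intro x
    obtain ⟨y, hy, hxy⟩ := hfper.exists_mem_Ico₀ hpi x
    rw [hxy]
    exact hx₀ (Set.Ico_subset_Icc_self hy)
  have hM : (⨆ x : ℝ, |f x|) = |f x₀| :=
    le_antisymm (ciSup_le hall)
      (le_ciSup (f := fun x => |f x|) ⟨|f x₀|, by rintro _ ⟨x, rfl⟩; exact hall x⟩ x₀)
  have hG : |g x₀| ≤ ⨆ x : ℝ, |g x| :=
    le_ciSup (f := fun x => |g x|) ⟨B, by rintro _ ⟨x, rfl⟩; exact hB x⟩ x₀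
  rw [hM]
  refine le_trans ?_ hG
  have e := heq x₀
  rcases le_total 0 (f x₀) with h0 | h0
  · rw [abs_of_nonneg h0] at hall ⊢
    have := aux_max f hc x₀ fun x => (le_abs_self _).trans (hall x)
    have := mul_nonneg hν.le (neg_nonneg.2 this)
    have := le_abs_self (g x₀)
    linarith
  · rw [abs_of_nonpos h0] at hall ⊢
    have h1 := aux_max (fun x => - f x) hc.neg x₀ fun x => (neg_le_abs _).trans (hall x)
    have h2 : deriv (fun x => - f x) = fun x => - deriv f x := by
      ext x; exact deriv.fun_neg
    rw [h2, deriv.fun_neg] at h1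
    have := mul_nonneg hν.le (neg_nonneg.2 h1)
    have := neg_le_abs (g x₀)
    have h3 : (-f x₀)^3 = -(f x₀)^3 := by ring
    rw [h3]
    linarith
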